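/- Let G be a connected simple graph with n ≥ 2 vertices and m ≥ 1 edges, and let S ⊆ V(G) with |S| = σ. Then the number of closed 4-walks of G_S satisfies Tr(A(G_S)^4) = σ + 2(M₁(G) − m) + 6·∑_{v∈S} d_G(v) − 2·∑_{v∈S} n₁(v) + 8·(n_{△1}(G_S) + 2·n_{△2}(G_S) + 3·n_{△3}(G_S) + n_□(G) + 3·n_⊠(G)). -/

import Mathlib

open Finset Matrix BigOperators

lemma aux_trace {V : Type*} [Fintype V] [DecidableEq V] (A D : Matrix V V ℝ) (hD : D * D = D) :
    ((A + D) ^ 4).trace = (A * A * A * A).trace + 4 * (A * A * A * D).trace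
      + 4 * (A * A * D).trace + 2 * (A * D * A * D).trace + 4 * (A * D).trace + D.trace := by
  have c1 : (D * (A * (A * A))).trace = (A * (A * (A * D))).trace := by
    rw [Matrix.trace_mul_comm]; simp only [Matrix.mul_assoc]
  have c2 : (A * (D * (A * A))).trace = (A * (A * (A * D))).trace := by
    rw [← Matrix.mul_assoc, Matrix.trace_mul_comm]; simp only [Matrix.mul_assoc]
  have c3 : (A * (A * (D * A))).trace = (A * (A * (A * D))).trace := by
    rw [Matrix.trace_mul_comm]; simp only [Matrix.mul_assoc]; exact c2
  have hD' : ∀ X : Matrix V V ℝ, D * (D * X) = D * X := fun X => by rw [← Matrix.mul_assoc, hD]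
  have e1 : (D * (A * A)).trace = (A * (A * D)).trace := by
    rw [Matrix.trace_mul_comm]; simp only [Matrix.mul_assoc]
  have e2 : (A * (D * A)).trace = (A * (A * D)).trace := by
    rw [Matrix.trace_mul_comm]; simp only [Matrix.mul_assoc]; exact e1
  have e3 : (D * (A * (A * D))).trace = (A * (A * D)).trace := by
    rw [Matrix.trace_mul_comm]; simp only [Matrix.mul_assoc, hD]
  have f1 : (D * (A * (D * A))).trace = (A * (D * (A * D))).trace := by
    rw [Matrix.trace_mul_comm]; simp only [Matrix.mul_assoc]
  have g1 : (D * A).trace = (A * D).trace := Matrix.trace_mul_comm _ _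
  have g2 : (D * (A * D)).trace = (A * D).trace := by
    rw [Matrix.trace_mul_comm]; simp only [Matrix.mul_assoc, hD]
  simp only [pow_succ, pow_zero, one_mul, add_mul, mul_add, Matrix.mul_assoc, hD, hD', Matrix.trace_add,
    c1, c2, c3, e1, e2, e3, f1, g1, g2]
  ring

lemma aux_tri {V : Type*} [Fintype V] [DecidableEq V] (G : SimpleGraph V) [DecidableRel G.Adj]
    (s : V → ℝ) :
    ∑ p ∈ (univ : Finset (V × V × V)).filter (fun p => G.Adj p.1 p.2.1 ∧ G.Adj p.2.1 p.2.2 ∧ G.Adj p.2.2 p.1),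
      s p.1 = 2 * ∑ T ∈ G.cliqueFinset 3, ∑ v ∈ T, s v := by
  rw [← Finset.sum_fiberwise_of_maps_to (t := G.cliqueFinset 3) (g := fun p => {p.1, p.2.1, p.2.2}), Finset.mul_sum]
  · refine Finset.sum_congr rfl fun T hT => ?_
    rw [SimpleGraph.mem_cliqueFinset_iff, SimpleGraph.is3Clique_iff] at hT
    obtain ⟨a, b, c, hab, hac, hbc, rfl⟩ := hT
    have h1 := hab.ne
    have h2 := hac.ne
    have h3 := hbc.ne
    have : (((univ : Finset (V × V × V)).filter (fun p => G.Adj p.1 p.2.1 ∧ G.Adj p.2.1 p.2.2 ∧ G.Adj p.2.2 p.1)).filter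
        (fun p => ({p.1, p.2.1, p.2.2} : Finset V) = {a, b, c}))
        = {(a,b,c),(a,c,b),(b,a,c),(b,c,a),(c,a,b),(c,b,a)} := by
      ext ⟨x, y, z⟩
      simp only [Finset.mem_filter, Finset.mem_univ, true_and, Finset.mem_insert, Finset.mem_singleton, Prod.mk.injEq]
      constructor
      · rintro ⟨⟨hxy, hyz, hzx⟩, h⟩
        have hx : x ∈ ({a, b, c} : Finset V) := by rw [← h]; simp
        have hy : y ∈ ({a, b, c} : Finset V) := by rw [← h]; simp
        have hz : z ∈ ({a, b, c} : Finset V) := by rw [← h]; simp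
        simp only [Finset.mem_insert, Finset.mem_singleton] at hx hy hz
        have := hxy.ne
        have := hyz.ne
        have := hzx.ne
        clear hxy hyz hzx h hab hac hbc
        grind
      · have := hab.symm
        have := hac.symm
        have := hbc.symm
        rintro (⟨rfl, rfl, rfl⟩ | ⟨rfl, rfl, rfl⟩ | ⟨rfl, rfl, rfl⟩ | ⟨rfl, rfl, rfl⟩ | ⟨rfl, rfl, rfl⟩ | ⟨rfl, rfl, rfl⟩) <;>
        refine ⟨⟨by assumption, by assumption, by assumption⟩, ?_⟩ <;> ext w <;>
        simp only [Finset.mem_insert, Finset.mem_singleton] <;> tauto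
    rw [this]
    repeat rw [Finset.sum_insert (by simp [h1, h2, h3, h1.symm, h2.symm, h3.symm])]
    repeat rw [Finset.sum_singleton]
    ring
  · rintro ⟨x, y, z⟩ h
    simp only [Finset.mem_filter, Finset.mem_univ, true_and] at h
    rw [SimpleGraph.mem_cliqueFinset_iff]
    exact SimpleGraph.is3Clique_iff.2 ⟨x, y, z, h.1, h.2.2.symm, h.2.1, rfl⟩

lemma aux_fiber {V : Type*} [Fintype V] [DecidableEq V] (T : Finset V) (hT : T.card = 4) :
    ((univ : Finset (ZMod 4 → V)).filter (fun f => Function.Injective f ∧ univ.image f = T)).card = 24 := by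
  have h : Fintype.card (ZMod 4 ↪ T) = 24 := by
    rw [Fintype.card_embedding_eq, Fintype.card_coe, hT, ZMod.card]; rfl
  rw [← h, ← Finset.card_univ]
  symm
  refine Finset.card_bij (fun e _ => fun i => (e i : V)) ?_ ?_ ?_
  · intro e _
    have hi : Function.Injective (fun i => (e i : V)) := Subtype.val_injective.comp e.injective
    simp only [Finset.mem_filter, Finset.mem_univ, true_and]
    refine ⟨hi, Finset.eq_of_subset_of_card_le ?_ ?_⟩
    · intro x hx
      obtain ⟨i, _, rfl⟩ := Finset.mem_image.1 hx
      exact (e i).2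
    · rw [Finset.card_image_of_injective _ hi, hT, Finset.card_univ, ZMod.card]
  · intro e _ e' _ h
    ext i
    exact congrFun h i
  · intro f hf
    simp only [Finset.mem_filter, Finset.mem_univ, true_and] at hf
    refine ⟨⟨fun i => ⟨f i, by rw [← hf.2]; simp⟩, fun i j hij => hf.1 (by simpa using hij)⟩, by simp, rfl⟩

lemma aux_four {V : Type*} [Fintype V] [DecidableEq V] (G : SimpleGraph V) [DecidableRel G.Adj] :
    Nat.card {f : ZMod 4 → V // Function.Injective f ∧ (∀ i, G.Adj (f i) (f (i + 1)))} =
    Nat.card {f : ZMod 4 → V // Function.Injective f ∧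
        (∀ i, G.Adj (f i) (f (i + 1))) ∧ ¬ G.IsClique (Set.range f)} + 24 * (G.cliqueFinset 4).card := by
  classical
  have hk : ((univ : Finset (ZMod 4 → V)).filter (fun f => Function.Injective f ∧ G.IsClique (Set.range f))).card
      = 24 * (G.cliqueFinset 4).card := by
    rw [Finset.card_eq_sum_card_fiberwise (t := G.cliqueFinset 4) (f := fun f => univ.image f),
      Finset.sum_congr rfl (g := fun _ => 24)]
    · simp [mul_comm]
    · intro T hT
      rw [SimpleGraph.mem_cliqueFinset_iff] at hT
      rw [← aux_fiber T hT.2]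
      congr 1
      ext f
      simp only [Finset.mem_filter, Finset.mem_univ, true_and]
      constructor
      · rintro ⟨⟨a, b⟩, c⟩; exact ⟨a, c⟩
      · rintro ⟨a, c⟩; refine ⟨⟨a, ?_⟩, c⟩
        have := hT.1
        rw [← c] at this
        simpa using this
    · intro f hf
      simp only [Finset.coe_filter, Set.mem_setOf_eq, Finset.mem_univ, true_and] at hf
      simp only [Finset.mem_coe, SimpleGraph.mem_cliqueFinset_iff]
      refine ⟨by simpa using hf.2, ?_⟩
      rw [Finset.card_image_of_injective _ hf.1, Finset.card_univ, ZMod.card]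
  rw [← hk, Nat.card_eq_fintype_card, Nat.card_eq_fintype_card, Fintype.card_subtype, Fintype.card_subtype]
  rw [← Finset.card_filter_add_card_filter_not (fun f : ZMod 4 → V => ¬ G.IsClique (Set.range f)),
    Finset.filter_filter, Finset.filter_filter]
  congr 2
  · ext f; simp only [Finset.mem_filter]; tauto
  · ext f; simp only [Finset.mem_filter, Finset.mem_univ, true_and, not_not]
    constructor
    · tauto
    · rintro ⟨a, b⟩
      refine ⟨⟨a, fun i => b ⟨i, rfl⟩ ⟨i+1, rfl⟩ fun h => ?_⟩, b⟩
      have key : ∀ i : ZMod 4, i = i + 1 → False := by decide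
      exact key i (a h)

lemma aux_card {V : Type*} [Fintype V] [DecidableEq V] (G : SimpleGraph V) [DecidableRel G.Adj] :
    Nat.card {f : ZMod 4 → V // Function.Injective f ∧ (∀ i, G.Adj (f i) (f (i + 1)))} =
    ((univ : Finset (V × V × V × V)).filter (fun p => (G.Adj p.1 p.2.1 ∧ G.Adj p.2.1 p.2.2.1
      ∧ G.Adj p.2.2.1 p.2.2.2 ∧ G.Adj p.2.2.2 p.1) ∧ p.1 ≠ p.2.2.1 ∧ p.2.1 ≠ p.2.2.2)).card := by
  classical
  rw [Nat.card_eq_fintype_card, Fintype.card_subtype]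
  refine Finset.card_bij (fun f _ => (f 0, f 1, f 2, f 3)) ?_ ?_ ?_
  · intro f hf
    simp only [Finset.mem_filter, Finset.mem_univ, true_and] at hf ⊢
    exact ⟨⟨hf.2 0, hf.2 1, hf.2 2, hf.2 3⟩, hf.1.ne (by decide), hf.1.ne (by decide)⟩
  · intro f _ g _ h
    have h := (by simpa only [Prod.mk.injEq] using h : f 0 = g 0 ∧ f 1 = g 1 ∧ f 2 = g 2 ∧ f 3 = g 3)
    funext i
    change Fin 4 at i
    fin_cases i
    · exact h.1
    · exact h.2.1
    · exact h.2.2.1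
    · exact h.2.2.2
  · rintro ⟨a, b, c, d⟩ h
    simp only [Finset.mem_filter, Finset.mem_univ, true_and] at h
    obtain ⟨⟨h1, h2, h3, h4⟩, h5, h6⟩ := h
    refine ⟨(![a, b, c, d] : Fin 4 → V), ?_, rfl⟩
    refine Finset.mem_filter.2 ⟨Finset.mem_univ _, ?_⟩
    have := h1.ne
    have := h2.ne
    have := h3.ne
    have := h4.ne
    constructor
    · intro i j hij
      change Fin 4 at i j
      fin_cases i <;> fin_cases j <;> first | rfl | (exfalso; simp at hij; grind)
    · intro i
      change Fin 4 at i
      fin_cases i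
      · exact h1
      · exact h2
      · exact h3
      · exact h4

lemma aux_A4 {V : Type*} [Fintype V] [DecidableEq V] (G : SimpleGraph V) [DecidableRel G.Adj] :
    (G.adjMatrix ℝ * G.adjMatrix ℝ * G.adjMatrix ℝ * G.adjMatrix ℝ).trace
     = 2 * (∑ v, (G.degree v : ℝ) ^ 2) - 2 * G.edgeFinset.card
      + (Nat.card {f : ZMod 4 → V // Function.Injective f ∧ (∀ i, G.Adj (f i) (f (i + 1)))} : ℝ) := by
  have hdeg : ∀ v, ∑ w, (if G.Adj v w then (1:ℝ) else 0) = G.degree v := by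
    intro v
    simp [← SimpleGraph.card_neighborFinset_eq_degree, SimpleGraph.neighborFinset_eq_filter]
  have hm : ∑ v, (G.degree v : ℝ) = 2 * G.edgeFinset.card := by
    exact_mod_cast G.sum_degrees_eq_twice_card_edges
  set a : V → V → ℝ := fun v w => if G.Adj v w then (1:ℝ) else 0 with ha
  have hdeg : ∀ v, ∑ w, a v w = G.degree v := hdeg
  have hs : ∀ v w, a v w = a w v := fun v w => by simp [ha, G.adj_comm]
  have hi : ∀ v w, a v w * a v w = a v w := fun v w => by simp [ha]
  have h0 : (G.adjMatrix ℝ * G.adjMatrix ℝ * G.adjMatrix ℝ * G.adjMatrix ℝ).trace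
      = ∑ x, ∑ y, ∑ z, ∑ w, a x y * a y z * a z w * a w x := by
    rw [Matrix.mul_assoc, Matrix.mul_assoc]
    simp only [Matrix.trace, Matrix.diag, Matrix.mul_apply, Finset.mul_sum,
      SimpleGraph.adjMatrix_apply]
    simp only [ha, mul_assoc]
  have hpt : ∀ x y z w : V, a x y * a y z * a z w * a w x =
      (if x = z then a x y * a x w else 0) + (if y = w then a y x * a y z else 0)
      - (if x = z then if y = w then a x y else 0 else 0)
      + (if (G.Adj x y ∧ G.Adj y z ∧ G.Adj z w ∧ G.Adj w x) ∧ x ≠ z ∧ y ≠ w then 1 else 0) := by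
    intro x y z w
    by_cases h1 : x = z <;> by_cases h2 : y = w
    · subst h1 h2; simp [hs y x, hi]
    · subst h1; simp [h2, hs y x, hs w x, hi, mul_assoc]
    · subst h2; simp only [h1, hs x y, hs z y, if_true, if_false, ne_eq, not_true, not_false_eq_true, and_false]; linear_combination a y z * a y z * hi y x + a y x * hi y z
    · simp only [ha, h1, h2]; by_cases g1 : G.Adj x y <;> by_cases g2 : G.Adj y z <;> by_cases g3 : G.Adj z w <;> by_cases g4 : G.Adj w x <;> simp [g1, g2, g3, g4, h1, h2]
  rw [h0, aux_card, Finset.card_filter, Nat.cast_sum]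
  simp only [hpt, Finset.sum_add_distrib, Finset.sum_sub_distrib, Fintype.sum_prod_type]
  have t1 : ∑ x : V, ∑ y : V, ∑ z : V, ∑ w : V, (if x = z then a x y * a x w else 0) = ∑ v, (G.degree v : ℝ) ^ 2 := by
    refine Finset.sum_congr rfl fun x _ => ?_
    rw [sq, ← hdeg, Finset.sum_mul]
    refine Finset.sum_congr rfl fun y _ => ?_
    rw [Finset.sum_comm]
    simp [Finset.mul_sum]
  have t2 : ∑ x : V, ∑ y : V, ∑ z : V, ∑ w : V, (if y = w then a y x * a y z else 0) = ∑ v, (G.degree v : ℝ) ^ 2 := by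
    rw [Finset.sum_comm]
    refine Finset.sum_congr rfl fun x _ => ?_
    rw [sq, ← hdeg, Finset.sum_mul]
    refine Finset.sum_congr rfl fun y _ => ?_
    simp [Finset.mul_sum]
  have t3 : ∑ x : V, ∑ y : V, ∑ z : V, ∑ w : V, (if x = z then if y = w then a x y else 0 else 0) = 2 * G.edgeFinset.card := by
    rw [← hm]
    refine Finset.sum_congr rfl fun x _ => ?_
    rw [← hdeg]
    refine Finset.sum_congr rfl fun y _ => ?_
    rw [Finset.sum_comm]
    simp
  rw [t1, t2, t3]
  push_cast
  ring





/-- **Closed 4-walks on a self-loop graph.** For a connected simple graph `G` on `n ≥ 2`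
vertices with `m ≥ 1` edges and `S ⊆ V(G)` with `|S| = σ`,
`Tr(A(G_S)^4) = σ + 2(M₁(G) - m) + 6 ∑_{v∈S} d_G(v) - 2 ∑_{v∈S} n₁(v)
  + 8 (n_{△1} + 2 n_{△2} + 3 n_{△3} + n_□(G) + 3 n_⊠(G))`,
where `M₁(G) = ∑_v d_G(v)²` is the first Zagreb index, `n₁(v)` is the number of neighbors of
`v` not in `S`, `n_{△r}` is the number of triangles of `G` with exactly `r` vertices in `S`,
`n_⊠(G)` is the number of `4`-cliques, and `n_□(G)` is the number of `4`-cycles whose vertex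
set is not a clique, where the number of such `4`-cycles is one eighth of the number of
injective maps `f : ℤ/4ℤ → V` with `f i` adjacent to `f (i+1)` for all `i` and range not a
clique. -/
theorem closed_four_walks_selfLoop {V : Type*} [Fintype V] [DecidableEq V]
    (G : SimpleGraph V) [DecidableRel G.Adj]
    (hconn : G.Connected) (hn : 2 ≤ Fintype.card V) (hm : 1 ≤ G.edgeFinset.card)
    (S : Finset V) (nsq : ℕ)
    (hnsq : 8 * nsq = Nat.card {f : ZMod 4 → V // Function.Injective f ∧
        (∀ i, G.Adj (f i) (f (i + 1))) ∧ ¬ G.IsClique (Set.range f)}) :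
    ((G.adjMatrix ℝ + Matrix.diagonal fun v => if v ∈ S then (1 : ℝ) else 0) ^ 4).trace
      = (S.card : ℝ)
        + 2 * ((∑ v, (G.degree v : ℝ) ^ 2) - (G.edgeFinset.card : ℝ))
        + 6 * (∑ v ∈ S, (G.degree v : ℝ))
        - 2 * (∑ v ∈ S, ((G.neighborFinset v \ S).card : ℝ))
        + 8 * ((((G.cliqueFinset 3).filter fun T => (T ∩ S).card = 1).card : ℝ)
            + 2 * (((G.cliqueFinset 3).filter fun T => (T ∩ S).card = 2).card : ℝ)
            + 3 * (((G.cliqueFinset 3).filter fun T => (T ∩ S).card = 3).card : ℝ)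
            + (nsq : ℝ)
            + 3 * ((G.cliqueFinset 4).card : ℝ)) := by
  classical
  have hD : (Matrix.diagonal fun v => if v ∈ S then (1 : ℝ) else 0) *
      (Matrix.diagonal fun v => if v ∈ S then (1 : ℝ) else 0) =
      (Matrix.diagonal fun v => if v ∈ S then (1 : ℝ) else 0) := by
    rw [Matrix.diagonal_mul_diagonal]; congr 1; ext v; simp
  rw [aux_trace _ _ hD, aux_A4, aux_four, ← hnsq]
  have h1 : (Matrix.diagonal fun v => if v ∈ S then (1 : ℝ) else 0).trace = S.card := by
    simp [Matrix.trace_diagonal]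
  have h2 : (G.adjMatrix ℝ * Matrix.diagonal fun v => if v ∈ S then (1 : ℝ) else 0).trace = 0 := by
    simp [Matrix.trace, Matrix.mul_diagonal]
  have h3 : (G.adjMatrix ℝ * G.adjMatrix ℝ * Matrix.diagonal fun v => if v ∈ S then (1 : ℝ) else 0).trace
      = ∑ v ∈ S, (G.degree v : ℝ) := by
    simp only [Matrix.trace, Matrix.diag, Matrix.mul_diagonal, SimpleGraph.adjMatrix_mul_self_apply_self]
    simp
  have h4 : (G.adjMatrix ℝ * (Matrix.diagonal fun v => if v ∈ S then (1 : ℝ) else 0) * G.adjMatrix ℝ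
      * Matrix.diagonal fun v => if v ∈ S then (1 : ℝ) else 0).trace
      = ∑ v ∈ S, (G.degree v : ℝ) - ∑ v ∈ S, ((G.neighborFinset v \ S).card : ℝ) := by
    rw [← Finset.sum_sub_distrib]
    have : ∀ v, (G.degree v : ℝ) - ((G.neighborFinset v \ S).card : ℝ) = (G.neighborFinset v ∩ S).card := by
      intro v
      rw [← SimpleGraph.card_neighborFinset_eq_degree, ← Finset.card_sdiff_add_card_inter (G.neighborFinset v) S]
      push_cast; ring
    simp only [this, Matrix.trace, Matrix.diag, Matrix.mul_diagonal]
    simp only [mul_ite, mul_one, mul_zero, Finset.sum_ite_mem, Finset.univ_inter]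
    refine Finset.sum_congr rfl fun v _ => ?_
    rw [Matrix.mul_apply]
    simp only [Matrix.mul_diagonal, SimpleGraph.adjMatrix_apply]
    rw [Finset.card_eq_sum_ones, Nat.cast_sum, ← Finset.univ_inter (G.neighborFinset v ∩ S), ← Finset.sum_ite_mem]
    refine Finset.sum_congr rfl fun w _ => ?_
    by_cases hw : w ∈ S <;> by_cases hv : G.Adj v w <;> simp [hw, hv, G.adj_comm w v]
  have h5 : (G.adjMatrix ℝ * G.adjMatrix ℝ * G.adjMatrix ℝ
      * Matrix.diagonal fun v => if v ∈ S then (1 : ℝ) else 0).trace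
      = 2 * ∑ T ∈ G.cliqueFinset 3, ∑ v ∈ T, (if v ∈ S then (1 : ℝ) else 0) := by
    rw [← aux_tri, Finset.sum_filter]
    rw [Matrix.mul_assoc (G.adjMatrix ℝ)]
    simp only [Fintype.sum_prod_type, Matrix.trace, Matrix.diag, Matrix.mul_diagonal]
    refine Finset.sum_congr rfl fun x _ => ?_
    simp only [Matrix.mul_apply, Finset.mul_sum, Finset.sum_mul, SimpleGraph.adjMatrix_apply]
    refine Finset.sum_congr rfl fun y _ => Finset.sum_congr rfl fun z _ => ?_
    by_cases hx : G.Adj x y <;> by_cases hy : G.Adj y z <;> by_cases hz : G.Adj z x <;> simp [hx, hy, hz]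
  have h6 : ∑ T ∈ G.cliqueFinset 3, ∑ v ∈ T, (if v ∈ S then (1 : ℝ) else 0)
      = (((G.cliqueFinset 3).filter fun T => (T ∩ S).card = 1).card : ℝ)
            + 2 * (((G.cliqueFinset 3).filter fun T => (T ∩ S).card = 2).card : ℝ)
            + 3 * (((G.cliqueFinset 3).filter fun T => (T ∩ S).card = 3).card : ℝ) := by
    simp only [Finset.card_filter, Nat.cast_sum, Finset.mul_sum, ← Finset.sum_add_distrib]
    refine Finset.sum_congr rfl fun T hT => ?_
    rw [SimpleGraph.mem_cliqueFinset_iff] at hT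
    have hle : (T ∩ S).card ≤ 3 := hT.2 ▸ Finset.card_le_card Finset.inter_subset_left
    rw [Finset.sum_ite_mem, Finset.sum_const, nsmul_eq_mul, mul_one]
    generalize (T ∩ S).card = k at hle
    interval_cases k <;> norm_num
  rw [h1, h2, h3, h4, h5, h6]
  push_cast
  ring
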